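/- Let l ∈ R_1 be a strong Lefschetz element for the R-module M and set S = k[l]. If the decomposition of M as a graded S-module is almost centered, then for every m ≥ 0 the decomposition of M ⊗_k k[y]/(y^m) as a graded k[l+y]-module is almost centered. -/

import Mathlib

open MvPolynomial TensorProduct

/-- `gr` is a grading making `M` a graded module over the standard graded polynomial ring
`k[x_1, …, x_n]`: `M` is the internal direct sum of the subspaces `gr i`, and homogeneous
polynomials of degree `i` map `gr j` into `gr (i + j)`. -/
def IsGrading (k : Type*) [Field k] (n : ℕ) {M : Type*} [AddCommGroup M] [Module k M]
    [Module (MvPolynomial (Fin n) k) M] (gr : ℕ → Submodule k M) : Prop :=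
  DirectSum.IsInternal gr ∧
    ∀ (i j : ℕ) (r : MvPolynomial (Fin n) k), r ∈ homogeneousSubmodule (Fin n) k i →
      ∀ x ∈ gr j, r • x ∈ gr (i + j)

/-- The scalar `z` satisfies the strong Lefschetz condition for the grading `gr`:
for all nonnegative `a` and `d`, multiplication by `z ^ a` maps `gr d` to `gr (d + a)`
injectively or surjectively. -/
def IsSLAction {k A T : Type*} [Field k] [CommRing A] [AddCommGroup T] [Module k T]
    [Module A T] (gr : ℕ → Submodule k T) (z : A) : Prop :=
  ∀ a d : ℕ, (∀ x ∈ gr d, z ^ a • x = 0 → x = 0) ∨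
    (∀ w ∈ gr (d + a), ∃ x ∈ gr d, z ^ a • x = w)

/-- The data `(iv α, dv α, e α)` exhibits a degree-zero decomposition
`T ≅ ⊕_α k[z](-(iv α))/(z^(dv α))` of the graded module `T` as a graded `k[z]`-module:
each `e α` is homogeneous of degree `iv α`, is killed by `z ^ dv α`, the elements
`z ^ j • e α` (`j < dv α`) are homogeneous of degree `iv α + j` and form a `k`-basis of `T`. -/
def IsDecomp {k A T : Type*} [Field k] [CommRing A] [AddCommGroup T] [Module k T]
    [Module A T] (gr : ℕ → Submodule k T) (z : A) {Λ : Type*} (iv dv : Λ → ℕ)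
    (e : Λ → T) : Prop :=
  (∀ α, 1 ≤ dv α) ∧ (∀ (α : Λ) (j : ℕ), j < dv α → z ^ j • e α ∈ gr (iv α + j)) ∧
    (∀ α, z ^ dv α • e α = 0) ∧
    LinearIndependent k (fun q : Σ α : Λ, Fin (dv α) => z ^ (q.2 : ℕ) • e q.1) ∧
    Submodule.span k (Set.range (fun q : Σ α : Λ, Fin (dv α) => z ^ (q.2 : ℕ) • e q.1)) = ⊤

/-- `p` is the socle degree of the graded module with grading `gr`:
the largest degree in which the module is nonzero. -/
def IsSocleDegree {k T : Type*} [Field k] [AddCommGroup T] [Module k T]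
    (gr : ℕ → Submodule k T) (p : ℕ) : Prop :=
  gr p ≠ ⊥ ∧ ∀ e : ℕ, p < e → gr e = ⊥

/-- The partial order on the cyclic summands of a decomposition:
`S_β ⪯ S_α` iff `iv α ≤ iv β` and `dv β + iv β ≤ dv α + iv α`. -/
def Prec {Λ : Type*} (iv dv : Λ → ℕ) (β α : Λ) : Prop :=
  iv α ≤ iv β ∧ dv β + iv β ≤ dv α + iv α

/-- A decomposition with data `(iv, dv)` is almost centered if whenever `S_β ⪯ S_α` one has
`|L_{αβ} - R_{αβ}| ≤ 1`, where `L_{αβ} = iv β - iv α` and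
`R_{αβ} = (dv α + iv α) - (dv β + iv β)`. -/
def AlmostCentered {Λ : Type*} (iv dv : Λ → ℕ) : Prop :=
  ∀ α β : Λ, Prec iv dv β α →
    |((iv β : ℤ) - (iv α : ℤ)) - (((dv α : ℤ) + (iv α : ℤ)) - ((dv β : ℤ) + (iv β : ℤ)))| ≤ 1

/-- The graded `R[y]`-module `M ⊗_k k[y]/(y^m)` (with `R = k[x_1, …, x_n]`), realized as the
quotient of the polynomial module `M[y]` by the submodule `y^m · M[y]`.  It is a module over
`R[y] = Polynomial R`, graded by total degree. -/
abbrev TruncExt (k : Type*) [Field k] (n : ℕ) (M : Type*) [AddCommGroup M]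
    [Module (MvPolynomial (Fin n) k) M] (m : ℕ) : Type _ :=
  PolynomialModule (MvPolynomial (Fin n) k) M ⧸
    (Ideal.span {(Polynomial.X : Polynomial (MvPolynomial (Fin n) k)) ^ m} •
      (⊤ : Submodule (Polynomial (MvPolynomial (Fin n) k))
        (PolynomialModule (MvPolynomial (Fin n) k) M)))

/-- The total-degree grading on `M ⊗_k k[y]/(y^m)`: the degree `e` component is spanned by
the classes of the elements `x · y^j` with `x ∈ M` homogeneous of degree `e - j`. -/
noncomputable def truncGr {k : Type*} [Field k] (n : ℕ) {M : Type*} [AddCommGroup M]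
    [Module k M] [Module (MvPolynomial (Fin n) k) M]
    [IsScalarTower k (MvPolynomial (Fin n) k) M]
    (gr : ℕ → Submodule k M) (m e : ℕ) : Submodule k (TruncExt k n M m) :=
  Submodule.span k {t | ∃ (j : ℕ) (x : M), j ≤ e ∧ x ∈ gr (e - j) ∧
    t = Submodule.Quotient.mk (PolynomialModule.single (MvPolynomial (Fin n) k) j x)}

/-- Linear forms of `R[y]`: elements `r + c·y` with `r ∈ R_1` a linear form of
`R = k[x_1, …, x_n]` and `c ∈ k`. -/
def IsLinearFormExt {k : Type*} [Field k] {n : ℕ}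
    (w : Polynomial (MvPolynomial (Fin n) k)) : Prop :=
  ∃ (r : MvPolynomial (Fin n) k) (c : k), r ∈ homogeneousSubmodule (Fin n) k 1 ∧
    w = Polynomial.C r + Polynomial.C (MvPolynomial.C c) * Polynomial.X

/-!
Call the sum of the first and last degree of a cyclic summand (a *string*) twice its center. The
strong Lefschetz property makes any two strings comparable, so "almost centered" means that twice
the center of every string is `c` or `c + 1` for a single `c`. Letting `sl₂` act irreducibly on
every string, with `l` as raising operator, the weights in degree `d` are then `2d - c` and
`2d - c - 1`.

The tensor product with the irreducible representation `k[y]/(y^m)` is an `sl₂`-representation with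
raising operator `l + y` and, with `c' = c + m - 1`, weights `2d - c'` and `2d - c' - 1` in
degree `d`. Wherever the lowering operator is locally nilpotent, the raising operator `E` behaves
as on strings: `E ^ a` is injective on weights `μ ≤ -a`, and vectors of weight `μ ≥ a` killed by
`E` lie in the range of `E ^ a`. Applied to the first and the last element of a string for `l + y`,
these two facts show that twice its center is `c'` or `c' + 1`, whichever decomposition is chosen.
-/

attribute [local instance] LieRing.ofAssociativeRing

section Sl2

variable {k V : Type*} [CommRing k] [AddCommGroup V] [Module k V] {H E F : Module.End k V}

/-- The commutation relations of a standard basis of `sl₂`. Unlike in `IsSl2Triple`, `h = 0` is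
allowed, as happens for the action on a trivial representation. -/
structure Sl2Relations {L : Type*} [LieRing L] (h e f : L) : Prop where
  lie_e_f : ⁅e, f⁆ = h
  lie_h_e_nsmul : ⁅h, e⁆ = 2 • e
  lie_h_f_nsmul : ⁅h, f⁆ = -(2 • f)

namespace Sl2Relations

theorem isSl2Triple {L : Type*} [LieRing L] {h e f : L} (t : Sl2Relations h e f) (h_ne : h ≠ 0) :
    IsSl2Triple h e f :=
  ⟨h_ne, t.lie_e_f, t.lie_h_e_nsmul, t.lie_h_f_nsmul⟩

theorem e_apply_f_apply (t : Sl2Relations H E F) (v : V) : E (F v) = F (E v) + H v := by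
  rw [← t.lie_e_f, Ring.lie_def]
  simp

theorem h_apply_e_apply (t : Sl2Relations H E F) (v : V) : H (E v) = E (H v) + 2 • E v := by
  rw [← LinearMap.smul_apply, ← t.lie_h_e_nsmul, Ring.lie_def]
  simp

theorem h_apply_f_apply (t : Sl2Relations H E F) (v : V) : H (F v) = F (H v) - 2 • F v := by
  rw [sub_eq_add_neg, ← LinearMap.smul_apply, ← LinearMap.neg_apply, ← t.lie_h_f_nsmul,
    Ring.lie_def]
  simp

theorem e_apply_mem_eigenspace (t : Sl2Relations H E F) {v : V} {μ : ℤ}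
    (hv : v ∈ H.eigenspace (μ : k)) : E v ∈ H.eigenspace ((μ + 2 : ℤ) : k) := by
  rw [Module.End.mem_eigenspace_iff] at hv ⊢
  rw [t.h_apply_e_apply, hv, map_smul]
  push_cast
  module

theorem f_apply_mem_eigenspace (t : Sl2Relations H E F) {v : V} {μ : ℤ}
    (hv : v ∈ H.eigenspace (μ : k)) : F v ∈ H.eigenspace ((μ - 2 : ℤ) : k) := by
  rw [Module.End.mem_eigenspace_iff] at hv ⊢
  rw [t.h_apply_f_apply, hv, map_smul]
  push_cast
  module

theorem pow_e_apply_mem_eigenspace (t : Sl2Relations H E F) {v : V} {μ : ℤ}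
    (hv : v ∈ H.eigenspace (μ : k)) (a : ℕ) :
    (E ^ a) v ∈ H.eigenspace ((μ + 2 * a : ℤ) : k) := by
  induction a with
  | zero => simpa using hv
  | succ a ih =>
    rw [pow_succ', Module.End.mul_apply]
    convert t.e_apply_mem_eigenspace ih using 3
    push_cast
    ring

theorem pow_succ_e_apply_f_apply_eq_zero (t : Sl2Relations H E F) {v : V} {μ : ℤ}
    (hv : v ∈ H.eigenspace (μ : k)) {a : ℕ} (hE : (E ^ a) v = 0) :
    (E ^ (a + 1)) (F v) = 0 := by
  have hH : (E ^ a) (H v) = 0 := by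
    rw [Module.End.mem_eigenspace_iff.mp hv, map_smul, hE, smul_zero]
  rw [pow_succ, Module.End.mul_apply, t.e_apply_f_apply, map_add, hH, add_zero]
  clear hH
  induction a generalizing v μ with
  | zero => simp_all
  | succ a ih =>
    rw [pow_succ, Module.End.mul_apply] at hE
    have hEv := t.e_apply_mem_eigenspace hv
    rw [pow_succ, Module.End.mul_apply, t.e_apply_f_apply, map_add, ih hEv hE,
      Module.End.mem_eigenspace_iff.mp hEv, map_smul, hE, smul_zero, add_zero]

section Field

variable {k V : Type*} [Field k] [CharZero k] [AddCommGroup V] [Module k V]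
  {H E F : Module.End k V}

theorem ne_zero_of_mem_eigenspace {v : V} {μ : ℤ} (hv : v ∈ H.eigenspace (μ : k)) (hv₀ : v ≠ 0)
    (hμ : μ ≠ 0) : H ≠ 0 := by
  rintro rfl
  exact smul_ne_zero (Int.cast_ne_zero.mpr hμ) hv₀ (Module.End.mem_eigenspace_iff.mp hv).symm

theorem pow_e_apply_ne_zero_of_f_apply_eq_zero (t : Sl2Relations H E F) {v : V} {μ : ℤ}
    (hv : v ∈ H.eigenspace (μ : k)) (hv₀ : v ≠ 0) (hF : F v = 0) {a : ℕ} (ha : a ≤ -μ) :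
    (E ^ a) v ≠ 0 := by
  rcases eq_or_ne μ 0 with rfl | hμ
  · obtain rfl : a = 0 := by omega
    simpa using hv₀
  have hH := ne_zero_of_mem_eigenspace hv hv₀ hμ
  rw [Module.End.mem_eigenspace_iff] at hv
  obtain ⟨w, hw⟩ := Int.eq_ofNat_of_zero_le (show 0 ≤ -μ by omega)
  have primitive : (t.isSl2Triple hH).symm.HasPrimitiveVectorWith v (-(μ : k)) :=
    ⟨hv₀, by simp [hv], hF⟩
  simpa using primitive.pow_toEnd_f_ne_zero_of_eq_nat (n := w) (by exact_mod_cast hw)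
    (i := a) (by omega)

theorem eq_zero_of_pow_e_apply_eq_zero (t : Sl2Relations H E F) {v : V} {μ : ℤ}
    (hF : v ∈ F.maxGenEigenspace 0) (hv : v ∈ H.eigenspace (μ : k)) {a : ℕ} (ha : a ≤ -μ)
    (hE : (E ^ a) v = 0) : v = 0 := by
  obtain ⟨N, hN⟩ := (F.mem_maxGenEigenspace 0 v).mp hF
  rw [zero_smul, sub_zero] at hN
  clear hF
  induction N generalizing v μ a with
  | zero => simpa using hN
  | succ N ih =>
    have hFv : F v = 0 :=
      ih (t.f_apply_mem_eigenspace hv) (by push_cast; omega)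
        (t.pow_succ_e_apply_f_apply_eq_zero hv hE) (by rwa [pow_succ] at hN)
    by_contra hv₀
    exact t.pow_e_apply_ne_zero_of_f_apply_eq_zero hv hv₀ hFv ha hE

theorem exists_pow_e_apply_pow_f_apply_eq_smul (t : Sl2Relations H E F) {v : V} {μ : ℤ}
    (hv : v ∈ H.eigenspace (μ : k)) (hv₀ : v ≠ 0) (hμ : μ ≠ 0) (hE : E v = 0) {a : ℕ}
    (ha : a ≤ μ) : ∃ c : k, c ≠ 0 ∧ (E ^ a) ((F ^ a) v) = c • v := by
  have hH := ne_zero_of_mem_eigenspace hv hv₀ hμ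
  have primitive : (t.isSl2Triple hH).HasPrimitiveVectorWith v (μ : k) :=
    ⟨hv₀, Module.End.mem_eigenspace_iff.mp hv, hE⟩
  have hEF (b : ℕ) : E ((F ^ (b + 1)) v) = ((b + 1 : k) * (μ - b)) • (F ^ b) v := by
    simpa using primitive.lie_e_pow_succ_toEnd_f b
  induction a with
  | zero => exact ⟨1, one_ne_zero, by simp⟩
  | succ a ih =>
    obtain ⟨c, hc, h⟩ := ih (by omega)
    have hμa : (μ - a : k) ≠ 0 := by
      rw [sub_ne_zero]
      exact_mod_cast (show μ ≠ a by omega)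
    refine ⟨(a + 1) * (μ - a) * c,
      mul_ne_zero (mul_ne_zero a.cast_add_one_ne_zero hμa) hc, ?_⟩
    rw [pow_succ E, Module.End.mul_apply, hEF, map_smul, h, smul_smul]

theorem mem_range_pow_e_of_e_apply_eq_zero (t : Sl2Relations H E F) {v : V} {μ : ℤ}
    (hv : v ∈ H.eigenspace (μ : k)) (hE : E v = 0) {a : ℕ} (ha : a ≤ μ) :
    v ∈ LinearMap.range (E ^ a) := by
  rcases eq_or_ne v 0 with rfl | hv₀
  · exact zero_mem _
  rcases eq_or_ne μ 0 with rfl | hμ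
  · obtain rfl : a = 0 := by omega
    exact ⟨v, rfl⟩
  obtain ⟨c, hc, h⟩ := t.exists_pow_e_apply_pow_f_apply_eq_smul hv hv₀ hμ hE ha
  exact ⟨c⁻¹ • (F ^ a) v, by rw [map_smul, h, inv_smul_smul₀ hc]⟩

end Field

end Sl2Relations

end Sl2

section LefschetzTriple

theorem mem_maxGenEigenspace_zero_of_apply_mem {k V : Type*} [CommRing k] [AddCommGroup V]
    [Module k V] {f : Module.End k V} {v : V} (h : f v ∈ f.maxGenEigenspace 0) :
    v ∈ f.maxGenEigenspace 0 := by
  rw [Module.End.mem_maxGenEigenspace] at h ⊢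
  obtain ⟨N, hN⟩ := h
  exact ⟨N + 1, by simpa [pow_succ] using hN⟩

variable {k V : Type*} [Field k] [AddCommGroup V] [Module k V]

/-- `(E, F, H)` is a *Lefschetz triple* for the grading `gr` of `V`: the operators satisfy the
`sl₂` relations, `F` is locally nilpotent, and a homogeneous vector of degree `d` only has
components of weight `2 * d - c` and `2 * d - c - 1`. These weights correspond to `E`-strings whose
first and last degrees add up to `c` and to `c + 1` respectively. -/
structure IsLefschetzTriple (gr : ℕ → Submodule k V) (c : ℤ) (E F H : Module.End k V) : Prop
    extends Sl2Relations H E F where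
  maxGenEigenspace_lower : F.maxGenEigenspace 0 = ⊤
  le_sup_eigenspace (d : ℕ) :
    gr d ≤ H.eigenspace ((2 * d - c : ℤ) : k) ⊔ H.eigenspace ((2 * d - c - 1 : ℤ) : k)

namespace IsLefschetzTriple

variable [CharZero k] {gr : ℕ → Submodule k V} {c : ℤ} {E F H : Module.End k V}

theorem exists_weight_components (t : IsLefschetzTriple gr c E F H) {d a : ℕ} {v : V}
    (hv : v ∈ gr d) (hE : (E ^ a) v = 0) :
    ∃ v₀ ∈ H.eigenspace ((2 * d - c : ℤ) : k), ∃ v₁ ∈ H.eigenspace ((2 * d - c - 1 : ℤ) : k),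
      (E ^ a) v₀ = 0 ∧ (E ^ a) v₁ = 0 ∧ v₀ + v₁ = v := by
  obtain ⟨v₀, h₀, v₁, h₁, rfl⟩ := Submodule.mem_sup.mp (t.le_sup_eigenspace d hv)
  have disjoint_weights := H.disjoint_genEigenspace
    (Int.cast_injective.ne (show 2 * d - c + 2 * a ≠ 2 * d - c - 1 + 2 * a by omega) :
      ((2 * d - c + 2 * a : ℤ) : k) ≠ ((2 * d - c - 1 + 2 * a : ℤ) : k)) 1 1
  rw [map_add] at hE
  have hE₀ : (E ^ a) v₀ = 0 :=
    Submodule.disjoint_def.mp disjoint_weights _ (t.pow_e_apply_mem_eigenspace h₀ a)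
      (eq_neg_of_add_eq_zero_left hE ▸ neg_mem (t.pow_e_apply_mem_eigenspace h₁ a))
  exact ⟨v₀, h₀, v₁, h₁, hE₀, by rwa [hE₀, zero_add] at hE, rfl⟩

theorem eq_zero_of_pow_apply_eq_zero (t : IsLefschetzTriple gr c E F H) {d a : ℕ}
    (hda : 2 * d + a ≤ c) {v : V} (hv : v ∈ gr d) (hE : (E ^ a) v = 0) : v = 0 := by
  have hF (w : V) : w ∈ F.maxGenEigenspace 0 := t.maxGenEigenspace_lower ▸ Submodule.mem_top
  obtain ⟨v₀, h₀, v₁, h₁, hE₀, hE₁, rfl⟩ := t.exists_weight_components hv hE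
  rw [t.eq_zero_of_pow_e_apply_eq_zero (hF v₀) h₀ (by omega) hE₀,
    t.eq_zero_of_pow_e_apply_eq_zero (hF v₁) h₁ (by omega) hE₁, add_zero]

theorem mem_range_pow_of_apply_eq_zero (t : IsLefschetzTriple gr c E F H) {d a : ℕ}
    (hda : a + c + 1 ≤ 2 * d) {v : V} (hv : v ∈ gr d) (hE : E v = 0) :
    v ∈ LinearMap.range (E ^ a) := by
  obtain ⟨v₀, h₀, v₁, h₁, hE₀, hE₁, rfl⟩ :=
    t.exists_weight_components (a := 1) hv (by rwa [pow_one])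
  rw [pow_one] at hE₀ hE₁
  exact add_mem (t.mem_range_pow_e_of_e_apply_eq_zero h₀ hE₀ (by omega))
    (t.mem_range_pow_e_of_e_apply_eq_zero h₁ hE₁ (by omega))

end IsLefschetzTriple

end LefschetzTriple

section Decomposition

variable {k A T Λ : Type*} [Field k] [CommRing A] [AddCommGroup T] [Module k T] [Module A T]
  {gr : ℕ → Submodule k T} {z : A} {iv dv : Λ → ℕ} {e : Λ → T}

namespace IsDecomp

/-- The `k`-basis `z ^ j • e α`, `j < dv α`, of a module decomposed into cyclic `k[z]`-modules. -/
noncomputable def basis (hdec : IsDecomp gr z iv dv e) : Module.Basis (Σ α, Fin (dv α)) k T :=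
  .mk hdec.2.2.2.1 hdec.2.2.2.2.ge

theorem basis_apply (hdec : IsDecomp gr z iv dv e) {α : Λ} (j : Fin (dv α)) :
    hdec.basis ⟨α, j⟩ = z ^ (j : ℕ) • e α :=
  Module.Basis.mk_apply ..

theorem linearMap_ext (hdec : IsDecomp gr z iv dv e) {P : Type*} [AddCommGroup P] [Module k P]
    {f g : T →ₗ[k] P} (h : ∀ α, ∀ j < dv α, f (z ^ j • e α) = g (z ^ j • e α)) : f = g :=
  hdec.basis.ext fun ⟨α, j⟩ => by simpa only [basis_apply] using h α j j.2

theorem pow_smul_eq_zero (hdec : IsDecomp gr z iv dv e) {α : Λ} {a : ℕ} (ha : dv α ≤ a) :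
    z ^ a • e α = 0 := by
  rw [← Nat.sub_add_cancel ha, pow_add, mul_smul, hdec.2.2.1, smul_zero]

theorem pow_smul_ne_zero (hdec : IsDecomp gr z iv dv e) {α : Λ} {j : ℕ} (hj : j < dv α) :
    z ^ j • e α ≠ 0 :=
  hdec.2.2.2.1.ne_zero ⟨α, j, hj⟩

theorem eq_span_pow_smul (hdec : IsDecomp gr z iv dv e) (hgr : iSupIndep gr) (d : ℕ) :
    gr d = Submodule.span k {x | ∃ α, ∃ j < dv α, iv α + j = d ∧ z ^ j • e α = x} := by
  set span_pow_smul : ℕ → Submodule k T := fun d =>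
    Submodule.span k {x | ∃ α, ∃ j < dv α, iv α + j = d ∧ z ^ j • e α = x}
  have span_le : span_pow_smul ≤ gr := fun d => Submodule.span_le.mpr <| by
    rintro _ ⟨α, j, hj, rfl, rfl⟩
    exact hdec.2.1 α j hj
  have iSup_eq_top : ⨆ d, span_pow_smul d = ⊤ := by
    rw [← top_le_iff, ← hdec.2.2.2.2, Submodule.span_le]
    rintro _ ⟨⟨α, j⟩, rfl⟩
    exact Submodule.mem_iSup_of_mem _ (Submodule.subset_span ⟨α, j, j.2, rfl, rfl⟩)
  exact congr_fun ((hgr.le_iff_eq_of_iSup_eq_top iSup_eq_top).mp span_le).symm d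

theorem pow_smul_ne_pow_smul (hdec : IsDecomp gr z iv dv e) [SMulCommClass A k T] {α : Λ}
    {j a : ℕ} (hj : j < dv α) (hja : j < a) (x : T) : z ^ a • x ≠ z ^ j • e α := by
  have coord_comp : hdec.basis.coord ⟨α, j, hj⟩ ∘ₗ Module.toModuleEnd k T (z ^ a) = 0 := by
    refine hdec.linearMap_ext fun β i hi => ?_
    suffices hdec.basis.coord ⟨α, j, hj⟩ (z ^ (a + i) • e β) = 0 by simpa [pow_add, mul_smul]
    rcases lt_or_ge (a + i) (dv β) with h | h
    · rw [← hdec.basis_apply ⟨a + i, h⟩, Module.Basis.coord_apply, Module.Basis.repr_self,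
        Finsupp.single_eq_of_ne]
      rintro ⟨⟩
      omega
    · rw [hdec.pow_smul_eq_zero h, map_zero]
  intro h
  have := LinearMap.congr_fun coord_comp x
  simp [h, ← hdec.basis_apply ⟨j, hj⟩] at this

theorem prec_or_prec (hdec : IsDecomp gr z iv dv e) [SMulCommClass A k T]
    (hSL : IsSLAction gr z) (α β : Λ) : Prec iv dv α β ∨ Prec iv dv β α := by
  wlog h : iv α ≤ iv β generalizing α β
  · exact (this β α (by omega)).symm
  by_contra! hnot
  simp only [Prec] at hnot
  have hβ := hdec.1 β
  -- `z ^ a` kills `e α`, yet some `z ^ j • e β` with `j < a` lies in degree `iv α + a`.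
  obtain ⟨a, ha⟩ : ∃ a, a = max (dv α) (iv β - iv α) := ⟨_, rfl⟩
  obtain ⟨j, hj⟩ := Nat.exists_eq_add_of_le (show iv β ≤ iv α + a by omega)
  have hjβ : j < dv β := by omega
  rcases hSL a (iv α) with inj | surj
  · have gen_mem : e α ∈ gr (iv α) := by simpa using hdec.2.1 α 0 (hdec.1 α)
    have gen_ne_zero : e α ≠ 0 := by simpa using hdec.pow_smul_ne_zero (hdec.1 α)
    exact gen_ne_zero (inj _ gen_mem (hdec.pow_smul_eq_zero (by omega)))
  · obtain ⟨x, -, hx⟩ := surj (z ^ j • e β) (hj ▸ hdec.2.1 β j hjβ)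
    exact hdec.pow_smul_ne_pow_smul hjβ (by omega) x hx

end IsDecomp

/-- The strings of a decomposition are *almost concentric* with parameter `c` if the first and the
last degree of each of them add up to `c` or `c + 1`. -/
def AlmostConcentric (iv dv : Λ → ℕ) (c : ℤ) : Prop :=
  ∀ α, c ≤ 2 * iv α + dv α - 1 ∧ (2 * iv α + dv α - 1 : ℤ) ≤ c + 1

theorem AlmostConcentric.almostCentered {c : ℤ} (h : AlmostConcentric iv dv c) :
    AlmostCentered iv dv := fun α β _ => by
  have := h α
  have := h β
  rw [abs_le]
  omega

theorem AlmostCentered.exists_almostConcentric (hac : AlmostCentered iv dv)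
    (htotal : ∀ α β, Prec iv dv α β ∨ Prec iv dv β α) : ∃ c, AlmostConcentric iv dv c := by
  rcases isEmpty_or_nonempty Λ with _ | _
  · exact ⟨0, isEmptyElim⟩
  obtain ⟨α₀, hα₀⟩ : ∃ α₀, ∀ α, 2 * iv α₀ + dv α₀ ≤ 2 * iv α + dv α :=
    ⟨_, fun α => Function.argmin_le (fun α => 2 * iv α + dv α) α⟩
  refine ⟨2 * iv α₀ + dv α₀ - 1, fun α => ?_⟩
  have := hα₀ α
  rcases htotal α α₀ with h | h
  · have := abs_le.mp (hac _ _ h)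
    omega
  · have := abs_le.mp (hac _ _ h)
    omega

variable [SMulCommClass A k T]

theorem IsLefschetzTriple.almostConcentric [CharZero k] {c : ℤ} {F H : Module.End k T}
    (t : IsLefschetzTriple gr c (Module.toModuleEnd k T z) F H) (hdec : IsDecomp gr z iv dv e) :
    AlmostConcentric iv dv c := by
  intro α
  have hα := hdec.1 α
  have pow_eq (a : ℕ) (x : T) : (Module.toModuleEnd k T z ^ a) x = z ^ a • x := by
    rw [← map_pow, Module.toModuleEnd_apply, DistribSMul.toLinearMap_apply]
  constructor
  · by_contra! h
    have gen_mem : z ^ 0 • e α ∈ gr (iv α) := hdec.2.1 α 0 hα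
    refine hdec.pow_smul_ne_zero hα
      (t.eq_zero_of_pow_apply_eq_zero (a := dv α) (by omega) gen_mem ?_)
    rw [pow_eq, pow_zero, one_smul, hdec.2.2.1]
  · by_contra! h
    have last_mem := hdec.2.1 α (dv α - 1) (by omega)
    have last_killed : Module.toModuleEnd k T z (z ^ (dv α - 1) • e α) = 0 := by
      rw [Module.toModuleEnd_apply, DistribSMul.toLinearMap_apply, smul_smul, ← pow_succ',
        hdec.pow_smul_eq_zero (by omega)]
    obtain ⟨x, hx⟩ := t.mem_range_pow_of_apply_eq_zero (a := dv α) (by omega) last_mem last_killed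
    exact hdec.pow_smul_ne_pow_smul (by omega) (by omega) x (pow_eq _ x ▸ hx)

end Decomposition

section StringTriple

variable {k A T Λ : Type*} [Field k] [CommRing A] [AddCommGroup T] [Module k T] [Module A T]
  {gr : ℕ → Submodule k T} {z : A} {iv dv : Λ → ℕ} {e : Λ → T}

namespace IsDecomp

/-- The operator on a decomposed module that acts on each string `k[z]/(z ^ dv α)` as the lowering
operator of the irreducible `sl₂`-representation in which `z` is the raising operator. -/
noncomputable def lowering (hdec : IsDecomp gr z iv dv e) : Module.End k T :=
  hdec.basis.constr k fun q => (q.2 * (dv q.1 - q.2) : k) • z ^ (q.2 - 1 : ℕ) • e q.1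

/-- The operator on a decomposed module whose eigenvalues on each string `k[z]/(z ^ dv α)` are the
weights `1 - dv α, 3 - dv α, …, dv α - 1` of the irreducible `sl₂`-representation. -/
noncomputable def weight (hdec : IsDecomp gr z iv dv e) : Module.End k T :=
  hdec.basis.constr k fun q => (2 * q.2 + 1 - dv q.1 : k) • z ^ (q.2 : ℕ) • e q.1

theorem lowering_pow_smul (hdec : IsDecomp gr z iv dv e) {α : Λ} {j : ℕ} (hj : j ≤ dv α) :
    hdec.lowering (z ^ j • e α) = (j * (dv α - j) : k) • z ^ (j - 1) • e α := by
  rcases hj.lt_or_eq with h | rfl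
  · rw [lowering, ← hdec.basis_apply ⟨j, h⟩, Module.Basis.constr_basis]
  · rw [hdec.pow_smul_eq_zero le_rfl, map_zero, sub_self, mul_zero, zero_smul]

theorem weight_pow_smul (hdec : IsDecomp gr z iv dv e) {α : Λ} {j : ℕ} (hj : j ≤ dv α) :
    hdec.weight (z ^ j • e α) = (2 * j + 1 - dv α : k) • z ^ j • e α := by
  rcases hj.lt_or_eq with h | rfl
  · rw [weight, ← hdec.basis_apply ⟨j, h⟩, Module.Basis.constr_basis, hdec.basis_apply]
  · rw [hdec.pow_smul_eq_zero le_rfl, map_zero, smul_zero]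

theorem maxGenEigenspace_lowering (hdec : IsDecomp gr z iv dv e) :
    hdec.lowering.maxGenEigenspace 0 = ⊤ := by
  rw [← top_le_iff, ← hdec.2.2.2.2, Submodule.span_le]
  rintro _ ⟨⟨α, j, hj⟩, rfl⟩
  induction j with
  | zero =>
    refine mem_maxGenEigenspace_zero_of_apply_mem ?_
    rw [hdec.lowering_pow_smul hj.le, Nat.cast_zero, zero_mul, zero_smul]
    exact zero_mem _
  | succ j ih =>
    refine mem_maxGenEigenspace_zero_of_apply_mem ?_
    rw [hdec.lowering_pow_smul hj.le]
    exact Submodule.smul_mem _ _ (ih (by omega))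

theorem le_sup_eigenspace_weight (hdec : IsDecomp gr z iv dv e) (hgr : iSupIndep gr) {c : ℤ}
    (hc : AlmostConcentric iv dv c) (d : ℕ) :
    gr d ≤ hdec.weight.eigenspace ((2 * d - c : ℤ) : k) ⊔
      hdec.weight.eigenspace ((2 * d - c - 1 : ℤ) : k) := by
  rw [hdec.eq_span_pow_smul hgr, Submodule.span_le]
  rintro _ ⟨α, j, hj, rfl, rfl⟩
  have hα := hc α
  have mem_eigenspace :
      z ^ j • e α ∈ hdec.weight.eigenspace ((2 * j + 1 - dv α : ℤ) : k) := by
    rw [Module.End.mem_eigenspace_iff, hdec.weight_pow_smul hj.le]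
    push_cast
    rfl
  rcases (by push_cast; omega : (2 * j + 1 - dv α : ℤ) = 2 * (iv α + j : ℕ) - c ∨
    (2 * j + 1 - dv α : ℤ) = 2 * (iv α + j : ℕ) - c - 1) with h | h
  · exact Submodule.mem_sup_left (h ▸ mem_eigenspace)
  · exact Submodule.mem_sup_right (h ▸ mem_eigenspace)

variable [SMulCommClass A k T]

theorem sl2Relations (hdec : IsDecomp gr z iv dv e) :
    Sl2Relations hdec.weight (Module.toModuleEnd k T z) hdec.lowering := by
  have raise (α : Λ) (j : ℕ) : Module.toModuleEnd k T z (z ^ j • e α) = z ^ (j + 1) • e α := by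
    rw [Module.toModuleEnd_apply, DistribSMul.toLinearMap_apply, pow_succ', mul_smul]
  constructor <;> refine hdec.linearMap_ext fun α j hj => ?_
  · rw [Ring.lie_def, LinearMap.sub_apply, Module.End.mul_apply, Module.End.mul_apply, raise,
      hdec.lowering_pow_smul hj.le, hdec.lowering_pow_smul hj, hdec.weight_pow_smul hj.le,
      LinearMap.map_smul, raise, Nat.succ_eq_add_one, Nat.add_sub_cancel]
    rcases j with _ | j
    · rw [Nat.cast_zero, zero_mul, zero_smul]
      generalize z ^ 0 • e α = x
      push_cast
      module
    · rw [Nat.add_sub_cancel]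
      generalize z ^ (j + 1) • e α = x
      push_cast
      module
  · rw [Ring.lie_def, LinearMap.sub_apply, Module.End.mul_apply, Module.End.mul_apply, raise,
      hdec.weight_pow_smul hj.le, hdec.weight_pow_smul hj, LinearMap.map_smul,
      LinearMap.smul_apply, raise]
    generalize z ^ (j + 1) • e α = x
    push_cast
    module
  · rw [Ring.lie_def, LinearMap.sub_apply, Module.End.mul_apply, Module.End.mul_apply,
      hdec.weight_pow_smul hj.le, LinearMap.neg_apply, LinearMap.smul_apply, LinearMap.map_smul,
      hdec.lowering_pow_smul hj.le, LinearMap.map_smul,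
      hdec.weight_pow_smul ((Nat.sub_le j 1).trans hj.le)]
    rcases j with _ | j
    · simp only [Nat.cast_zero, zero_mul, zero_smul, smul_zero, sub_zero, neg_zero]
    · rw [Nat.add_sub_cancel]
      generalize z ^ j • e α = x
      push_cast
      module

theorem isLefschetzTriple (hdec : IsDecomp gr z iv dv e) (hgr : iSupIndep gr) {c : ℤ}
    (hc : AlmostConcentric iv dv c) :
    IsLefschetzTriple gr c (Module.toModuleEnd k T z) hdec.lowering hdec.weight where
  toSl2Relations := hdec.sl2Relations
  maxGenEigenspace_lower := hdec.maxGenEigenspace_lowering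
  le_sup_eigenspace := hdec.le_sup_eigenspace_weight hgr hc

end IsDecomp

end StringTriple

section TruncPolynomialModule

/-- The truncated polynomial module `M[y] / y ^ m M[y]`, i.e. `M ⊗ k[y] / (y ^ m)`, over a
`k`-algebra `R`; `TruncExt` is the case of a polynomial ring `R`. -/
abbrev TruncPolynomialModule (R M : Type*) [CommRing R] [AddCommGroup M] [Module R M] (m : ℕ) :
    Type _ :=
  PolynomialModule R M ⧸
    (Ideal.span {(Polynomial.X : Polynomial R) ^ m} • ⊤ :
      Submodule (Polynomial R) (PolynomialModule R M))

namespace TruncPolynomialModule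

variable {k R M P : Type*} [CommRing k] [CommRing R] [Algebra k R] [AddCommGroup M] [Module k M]
  [Module R M] [IsScalarTower k R M] [AddCommGroup P] [Module k P] {m : ℕ}

variable (k R M m) in
/-- The linear map `x ↦ x y ^ s` into the truncated polynomial module. -/
noncomputable def mk (s : ℕ) : M →ₗ[k] TruncPolynomialModule R M m where
  toFun x := Submodule.Quotient.mk (PolynomialModule.single R s x)
  map_add' x y := by rw [PolynomialModule.single_add, Submodule.Quotient.mk_add]
  map_smul' c x := by
    rw [RingHom.id_apply, ← Submodule.Quotient.mk_smul]
    congr 1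
    ext t
    exact DFunLike.congr_fun (Finsupp.smul_single c s x).symm t

theorem mk_apply (s : ℕ) (x : M) :
    mk k R M m s x = Submodule.Quotient.mk (PolynomialModule.single R s x) := rfl

theorem iSup_range_mk : ⨆ s, LinearMap.range (mk k R M m s) = ⊤ := by
  refine Submodule.eq_top_iff'.mpr fun v => ?_
  obtain ⟨p, rfl⟩ := Submodule.Quotient.mk_surjective _ v
  induction p using PolynomialModule.induction_linear with
  | zero => exact zero_mem _
  | add p q hp hq => exact add_mem hp hq
  | single s x => exact Submodule.mem_iSup_of_mem s ⟨x, rfl⟩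

theorem linearMap_ext {f g : TruncPolynomialModule R M m →ₗ[k] P}
    (h : ∀ s x, f (mk k R M m s x) = g (mk k R M m s x)) : f = g := by
  have top_le : ⊤ ≤ LinearMap.eqLocus f g := by
    rw [← iSup_range_mk, iSup_le_iff]
    rintro s _ ⟨x, rfl⟩
    exact h s x
  exact LinearMap.ext fun v => top_le trivial

theorem C_add_X_smul_mk (r : R) (s : ℕ) (x : M) :
    (Polynomial.C r + Polynomial.X) • mk k R M m s x =
      mk k R M m s (r • x) + mk k R M m (s + 1) x := by
  change Submodule.Quotient.mk (_ • _) = Submodule.Quotient.mk (_ + _)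
  rw [add_smul, ← Polynomial.monomial_zero_left, ← Polynomial.monomial_one_one_eq_X,
    PolynomialModule.monomial_smul_single, PolynomialModule.monomial_smul_single, one_smul,
    zero_add, add_comm 1]

theorem X_pow_smul_single (r s : ℕ) (x : M) :
    (Polynomial.X ^ r : Polynomial R) • PolynomialModule.single R s x =
      PolynomialModule.single R (r + s) x := by
  rw [← Polynomial.monomial_one_right_eq_X_pow, PolynomialModule.monomial_smul_single, one_smul]

theorem mk_of_le {s : ℕ} (hs : m ≤ s) : mk k R M m s = 0 := by
  ext x
  refine (Submodule.Quotient.mk_eq_zero _).mpr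
    ((Submodule.ideal_span_singleton_smul _ _).ge
      ⟨PolynomialModule.single R (s - m) x, trivial, ?_⟩)
  exact (X_pow_smul_single m (s - m) x).trans (by rw [Nat.add_sub_cancel' hs])

variable (k R) in
/-- The linear map out of the polynomial module `M[y]` that sends `x y ^ s` to `φ s x`. -/
noncomputable def liftPolynomialModule (φ : ℕ → M →ₗ[k] P) : PolynomialModule R M →ₗ[k] P :=
  Finsupp.lsum k φ ∘ₗ (PolynomialModule.coeffLinearEquiv R k).toLinearMap

omit [Algebra k R] [IsScalarTower k R M] in
theorem liftPolynomialModule_single (φ : ℕ → M →ₗ[k] P) (s : ℕ) (x : M) :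
    liftPolynomialModule k R φ (PolynomialModule.single R s x) = φ s x := by
  simp [liftPolynomialModule]

theorem restrictScalars_le_ker_liftPolynomialModule {φ : ℕ → M →ₗ[k] P}
    (hφ : ∀ s, m ≤ s → φ s = 0) :
    (Ideal.span {(Polynomial.X : Polynomial R) ^ m} • ⊤ :
      Submodule (Polynomial R) (PolynomialModule R M)).restrictScalars k ≤
      LinearMap.ker (liftPolynomialModule k R φ) := by
  rw [Submodule.ideal_span_singleton_smul]
  rintro _ ⟨q, -, rfl⟩
  change liftPolynomialModule k R φ ((Polynomial.X ^ m : Polynomial R) • q) = 0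
  induction q using PolynomialModule.induction_linear with
  | zero => rw [smul_zero, map_zero]
  | add x y hx hy => rw [smul_add, map_add, hx, hy, add_zero]
  | single s x =>
    rw [X_pow_smul_single, liftPolynomialModule_single, hφ _ (Nat.le_add_right m s),
      LinearMap.zero_apply]

/-- The linear map out of the truncated polynomial module that sends `x y ^ s` to `φ s x`. -/
noncomputable def lift (φ : ℕ → M →ₗ[k] P) (hφ : ∀ s, m ≤ s → φ s = 0) :
    TruncPolynomialModule R M m →ₗ[k] P :=
  (Submodule.restrictScalars k _).liftQ (liftPolynomialModule k R φ)
    (restrictScalars_le_ker_liftPolynomialModule hφ) ∘ₗ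
      (Submodule.Quotient.restrictScalarsEquiv k _).symm.toLinearMap

theorem lift_mk (φ : ℕ → M →ₗ[k] P) (hφ : ∀ s, m ≤ s → φ s = 0) (s : ℕ) (x : M) :
    lift (R := R) φ hφ (mk k R M m s x) = φ s x :=
  liftPolynomialModule_single φ s x

variable (R m) in
/-- The operator `F ⊗ 1 + 1 ⊗ f` on `M ⊗ k[y] / (y ^ m)`, where `f` maps `y ^ s` to
`s (m - s) y ^ (s - 1)`. -/
noncomputable def lowering (F : Module.End k M) : Module.End k (TruncPolynomialModule R M m) :=
  lift (fun s => mk k R M m s ∘ₗ F + (s * (m - s) : k) • mk k R M m (s - 1)) fun s hs => by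
    rw [mk_of_le hs, LinearMap.zero_comp, zero_add]
    rcases hs.lt_or_eq with h | rfl
    · rw [mk_of_le (Nat.le_sub_one_of_lt h), smul_zero]
    · rw [sub_self, mul_zero, zero_smul]

variable (R m) in
/-- The operator `H ⊗ 1 + 1 ⊗ h` on `M ⊗ k[y] / (y ^ m)`, where `h` maps `y ^ s` to
`(2 s + 1 - m) y ^ s`. -/
noncomputable def weight (H : Module.End k M) : Module.End k (TruncPolynomialModule R M m) :=
  lift (fun s => mk k R M m s ∘ₗ H + (2 * s + 1 - m : k) • mk k R M m s) fun s hs => by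
    rw [mk_of_le hs, LinearMap.zero_comp, smul_zero, zero_add]

theorem lowering_mk (F : Module.End k M) (s : ℕ) (x : M) :
    lowering R m F (mk k R M m s x) =
      mk k R M m s (F x) + (s * (m - s) : k) • mk k R M m (s - 1) x :=
  lift_mk ..

theorem weight_mk (H : Module.End k M) (s : ℕ) (x : M) :
    weight R m H (mk k R M m s x) =
      mk k R M m s (H x) + (2 * s + 1 - m : k) • mk k R M m s x :=
  lift_mk ..

theorem mk_mem_eigenspace_weight {H : Module.End k M} {μ : ℤ} {x : M}
    (hx : x ∈ H.eigenspace (μ : k)) (s : ℕ) :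
    mk k R M m s x ∈ (weight R m H).eigenspace ((μ + 2 * s + 1 - m : ℤ) : k) := by
  rw [Module.End.mem_eigenspace_iff] at hx ⊢
  rw [weight_mk, hx, map_smul]
  push_cast
  module

theorem sl2Relations {F H : Module.End k M} {r : R}
    (t : Sl2Relations H (Module.toModuleEnd k M r) F) :
    Sl2Relations (weight R m H)
      (Module.toModuleEnd k (TruncPolynomialModule R M m)
        (Polynomial.C r + Polynomial.X : Polynomial R))
      (lowering R m F) := by
  have raise (s : ℕ) (x : M) :
      Module.toModuleEnd k (TruncPolynomialModule R M m)
        (Polynomial.C r + Polynomial.X : Polynomial R) (mk k R M m s x) =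
      mk k R M m s (Module.toModuleEnd k M r x) + mk k R M m (s + 1) x := C_add_X_smul_mk r s x
  generalize Module.toModuleEnd k (TruncPolynomialModule R M m)
    (Polynomial.C r + Polynomial.X : Polynomial R) = E at raise ⊢
  constructor <;> refine linearMap_ext fun s x => ?_
  · simp only [Ring.lie_def, LinearMap.sub_apply, Module.End.mul_apply, raise, lowering_mk,
      weight_mk, map_add, map_smul, t.e_apply_f_apply, Nat.add_sub_cancel]
    rcases s with _ | s
    · push_cast
      module
    · push_cast [Nat.add_sub_cancel]
      module
  · simp only [Ring.lie_def, LinearMap.sub_apply, LinearMap.smul_apply, Module.End.mul_apply, raise,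
      weight_mk, map_add, map_smul, map_nsmul, t.h_apply_e_apply]
    push_cast
    module
  · simp only [Ring.lie_def, LinearMap.sub_apply, LinearMap.neg_apply, LinearMap.smul_apply,
      Module.End.mul_apply, lowering_mk, weight_mk, map_add, map_sub, map_smul,
      map_nsmul, t.h_apply_f_apply]
    rcases s with _ | s
    · push_cast
      module
    · push_cast [Nat.add_sub_cancel]
      module

theorem mk_mem_maxGenEigenspace_lowering {F : Module.End k M} (hF : F.maxGenEigenspace 0 = ⊤)
    (s : ℕ) (x : M) (h : ∀ y, (s * (m - s) : k) • mk k R M m (s - 1) y ∈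
      (lowering R m F).maxGenEigenspace 0) :
    mk k R M m s x ∈ (lowering R m F).maxGenEigenspace 0 := by
  obtain ⟨N, hN⟩ := (F.mem_maxGenEigenspace 0 x).mp (hF.ge Submodule.mem_top)
  rw [zero_smul, sub_zero] at hN
  induction N generalizing x with
  | zero =>
    obtain rfl : x = 0 := by simpa using hN
    rw [map_zero]
    exact zero_mem _
  | succ N ih =>
    refine mem_maxGenEigenspace_zero_of_apply_mem ?_
    rw [lowering_mk]
    exact add_mem (ih (F x) (by rwa [pow_succ] at hN)) (h x)

theorem maxGenEigenspace_lowering {F : Module.End k M} (hF : F.maxGenEigenspace 0 = ⊤) :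
    (lowering R m F).maxGenEigenspace 0 = ⊤ := by
  rw [← top_le_iff, ← iSup_range_mk, iSup_le_iff]
  rintro s _ ⟨x, rfl⟩
  induction s generalizing x with
  | zero => exact mk_mem_maxGenEigenspace_lowering hF 0 x fun y => by simp
  | succ s ih =>
    exact mk_mem_maxGenEigenspace_lowering hF (s + 1) x fun y => Submodule.smul_mem _ _ (ih y)

end TruncPolynomialModule

end TruncPolynomialModule

theorem IsLefschetzTriple.truncGr {k M : Type*} [Field k] {n : ℕ} [AddCommGroup M] [Module k M]
    [Module (MvPolynomial (Fin n) k) M] [IsScalarTower k (MvPolynomial (Fin n) k) M]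
    {gr : ℕ → Submodule k M} {c : ℤ} {r : MvPolynomial (Fin n) k} {F H : Module.End k M}
    (t : IsLefschetzTriple gr c (Module.toModuleEnd k M r) F H) (m : ℕ) :
    IsLefschetzTriple (truncGr n gr m) (c + m - 1)
      (Module.toModuleEnd k (TruncExt k n M m) (Polynomial.C r + Polynomial.X))
      (TruncPolynomialModule.lowering _ m F) (TruncPolynomialModule.weight _ m H) where
  toSl2Relations := TruncPolynomialModule.sl2Relations t.toSl2Relations
  maxGenEigenspace_lower :=
    TruncPolynomialModule.maxGenEigenspace_lowering t.maxGenEigenspace_lower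
  le_sup_eigenspace d := by
    refine Submodule.span_le.mpr ?_
    rintro _ ⟨j, x, hj, hx, rfl⟩
    obtain ⟨x₀, h₀, x₁, h₁, rfl⟩ := Submodule.mem_sup.mp (t.le_sup_eigenspace _ hx)
    have weight₀ : 2 * (d - j : ℕ) - c + 2 * j + 1 - m = 2 * (d : ℤ) - (c + m - 1) := by omega
    have weight₁ : 2 * (d - j : ℕ) - c - 1 + 2 * j + 1 - m = 2 * (d : ℤ) - (c + m - 1) - 1 := by
      omega
    refine Submodule.mem_sup.mpr
      ⟨_, weight₀ ▸ TruncPolynomialModule.mk_mem_eigenspace_weight h₀ j,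
        _, weight₁ ▸ TruncPolynomialModule.mk_mem_eigenspace_weight h₁ j, ?_⟩
    rw [← map_add, TruncPolynomialModule.mk_apply]

theorem statement5_general {k M : Type*} [Field k] [CharZero k] {n : ℕ} [AddCommGroup M]
    [Module k M] [Module (MvPolynomial (Fin n) k) M]
    [IsScalarTower k (MvPolynomial (Fin n) k) M] (gr : ℕ → Submodule k M) (hgr : iSupIndep gr)
    (l : MvPolynomial (Fin n) k) (hSL : IsSLAction gr l) {Λ : Type*} (iv dv : Λ → ℕ) (e : Λ → M)
    (hdec : IsDecomp gr l iv dv e) (hac : AlmostCentered iv dv) (m : ℕ) {Λ' : Type*}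
    (iv' dv' : Λ' → ℕ) (e' : Λ' → TruncExt k n M m)
    (hdec' : IsDecomp (truncGr n gr m) (Polynomial.C l + Polynomial.X) iv' dv' e') :
    AlmostCentered iv' dv' := by
  obtain ⟨c, hc⟩ := hac.exists_almostConcentric (hdec.prec_or_prec hSL)
  have triple := (hdec.isLefschetzTriple hgr hc).truncGr m
  exact (triple.almostConcentric hdec').almostCentered

/-- Let `l ∈ R_1` be a strong Lefschetz element for `M`, `S = k[l]`.  If the
decomposition of `M` as a graded `S`-module is almost centered, then for every `m ≥ 0` the
decomposition of `M ⊗_k k[y]/(y^m)` as a graded `k[l+y]`-module is almost centered. -/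
theorem statement5 {k : Type} [Field k] [CharZero k] {n : ℕ} {M : Type} [AddCommGroup M]
    [Module k M] [Module (MvPolynomial (Fin n) k) M]
    [IsScalarTower k (MvPolynomial (Fin n) k) M]
    [Module.Finite (MvPolynomial (Fin n) k) M] [FiniteDimensional k M]
    (gr : ℕ → Submodule k M) (hgr : IsGrading k n gr)
    (l : MvPolynomial (Fin n) k) (hl : l ∈ homogeneousSubmodule (Fin n) k 1)
    (hSL : IsSLAction gr l)
    {Λ : Type} [Fintype Λ] (iv dv : Λ → ℕ) (e : Λ → M)
    (hdec : IsDecomp gr l iv dv e) (hac : AlmostCentered iv dv) :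
    ∀ (m : ℕ) (Λ' : Type) (_ : Fintype Λ') (iv' dv' : Λ' → ℕ)
      (e' : Λ' → TruncExt k n M m),
      IsDecomp (truncGr n gr m) (Polynomial.C l + Polynomial.X) iv' dv' e' →
        AlmostCentered iv' dv' := by
  intro m Λ' _ iv' dv' e'
  exact statement5_general gr hgr.1.submodule_iSupIndep l hSL iv dv e hdec hac m iv' dv' e'
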